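/- Model blocks as the inductive type in which a block B consists of an author author(B) ∈ V, a round round(B) ∈ ℕ, and a finite ordered list parents(B) of blocks. Define SupportedBlock(B, A, r) recursively: if r ≥ round(B), return none; otherwise iterate over parents(B) in order and, for each parent b′, if (author(b′), round(b′)) = (A, r) return some b′, else if SupportedBlock(b′, A, r) = some res return some res; if the iteration completes without returning, return none. Let B₀, B₁, …, B_k be a sequence of blocks with strictly increasing rounds (round(B_i) < round(B_{i+1}) for all i < k) such that for each i < k the first element of parents(B_{i+1}) is B_i. Then: (a) if SupportedBlock(B_i, A, r) = some b for some index i, then SupportedBlock(B_j, A, r) = some b for every j with i ≤ j ≤ k; and consequently (b) there do not exist indices i, j and distinct blocks b ≠ b′ with SupportedBlock(B_i, A, r) = some b and SupportedBlock(B_j, A, r) = some b′. -/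

import Mathlib

/-- A block consists of an author, a round number, and an ordered list of
parent blocks. -/
inductive Block (V : Type) : Type where
  | mk (author : V) (round : ℕ) (parents : List (Block V)) : Block V

def Block.author {V : Type} : Block V → V
  | .mk a _ _ => a

def Block.round {V : Type} : Block V → ℕ
  | .mk _ r _ => r

def Block.parents {V : Type} : Block V → List (Block V)
  | .mk _ _ ps => ps

mutual
/-- `supportedBlock A r B`: the block of author `A` and round `r` supported by
`B`, i.e. the first block with author `A` and round `r` encountered in the
depth-first search from `B` following the ordered parent references
(Algorithm 1, `SupportedBlock`). -/
def supportedBlock {V : Type} [DecidableEq V] (A : V) (r : ℕ) :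
    Block V → Option (Block V)
  | .mk _ rd ps => if r ≥ rd then none else supportedList A r ps

def supportedList {V : Type} [DecidableEq V] (A : V) (r : ℕ) :
    List (Block V) → Option (Block V)
  | [] => none
  | p :: ps =>
    if p.author = A ∧ p.round = r then some p
    else
      match supportedBlock A r p with
      | some res => some res
      | none => supportedList A r ps
end

/-!
A block can only support blocks of strictly earlier rounds. So if `P` supports `b` for the slot
`(A, r)`, then `P` does not itself occupy that slot, and a search from any block `Q` of no smaller
round whose first parent is `P` begins by searching from `P` and returns `b`. Support thus persists
along the chain; in particular the last block supports every block supported along it, and it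
supports at most one.
-/

section DepthFirstSearch

variable {V : Type} [DecidableEq V] {A : V} {r : ℕ}

theorem supportedBlock_eq_ite (Q : Block V) :
    supportedBlock A r Q = if r ≥ Q.round then none else supportedList A r Q.parents := by
  cases Q
  rw [supportedBlock, Block.round, Block.parents]

theorem lt_round_of_supportedBlock_eq_some {P b : Block V}
    (hP : supportedBlock A r P = some b) : r < P.round := by
  by_contra! hround
  rw [supportedBlock_eq_ite, if_pos hround] at hP
  contradiction

theorem supportedList_cons_of_supportedBlock_eq_some {P b : Block V} (ps : List (Block V))
    (hP : supportedBlock A r P = some b) : supportedList A r (P :: ps) = some b := by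
  have not_slot : ¬ (P.author = A ∧ P.round = r) := fun hslot =>
    (lt_round_of_supportedBlock_eq_some hP).ne' hslot.2
  rw [supportedList, if_neg not_slot, hP]

theorem supportedBlock_eq_some_of_head?_parents {P Q b : Block V}
    (hround : P.round ≤ Q.round) (hfirst : Q.parents.head? = some P)
    (hP : supportedBlock A r P = some b) : supportedBlock A r Q = some b := by
  have hrQ : r < Q.round := (lt_round_of_supportedBlock_eq_some hP).trans_le hround
  obtain ⟨ps, hparents⟩ := List.head?_eq_some_iff.mp hfirst
  rw [supportedBlock_eq_ite, if_neg hrQ.not_ge, hparents]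
  exact supportedList_cons_of_supportedBlock_eq_some ps hP

theorem supportedBlock_eq_some_of_le {k : ℕ} {B : ℕ → Block V}
    (h_mono : ∀ i < k, (B i).round ≤ (B (i + 1)).round)
    (h_first : ∀ i < k, (B (i + 1)).parents.head? = some (B i))
    {i j : ℕ} (hij : i ≤ j) (hjk : j ≤ k) {b : Block V}
    (hb : supportedBlock A r (B i) = some b) : supportedBlock A r (B j) = some b := by
  induction j, hij using Nat.le_induction with
  | base => exact hb
  | succ j _ ih =>
    exact supportedBlock_eq_some_of_head?_parents (h_mono j hjk) (h_first j hjk)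
      (ih (Nat.le_of_succ_le hjk))

end DepthFirstSearch

theorem unique_support_general {V : Type} [DecidableEq V] (k : ℕ) (B : ℕ → Block V)
    (A : V) (r : ℕ)
    (h_mono : ∀ i < k, (B i).round ≤ (B (i + 1)).round)
    (h_first : ∀ i < k, (B (i + 1)).parents.head? = some (B i)) :
    (∀ i j : ℕ, i ≤ j → j ≤ k → ∀ b : Block V,
        supportedBlock A r (B i) = some b → supportedBlock A r (B j) = some b)
    ∧ ¬ ∃ i j : ℕ, i ≤ k ∧ j ≤ k ∧ ∃ b b' : Block V, b ≠ b' ∧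
        supportedBlock A r (B i) = some b ∧
        supportedBlock A r (B j) = some b' := by
  refine ⟨fun _ _ hij hjk _ => supportedBlock_eq_some_of_le h_mono h_first hij hjk, ?_⟩
  rintro ⟨i, j, hik, hjk, b, b', hne, hb, hb'⟩
  have last_supports_b : supportedBlock A r (B k) = some b :=
    supportedBlock_eq_some_of_le h_mono h_first hik le_rfl hb
  have last_supports_b' : supportedBlock A r (B k) = some b' :=
    supportedBlock_eq_some_of_le h_mono h_first hjk le_rfl hb'
  exact hne (Option.some.inj (last_supports_b.symm.trans last_supports_b'))

/-- Lemma `unique-support`: along a chain of blocks `B 0, B 1, …, B k` with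
strictly increasing rounds in which each block's first parent is the previous
block of the chain (a correct validator's sequence of blocks), (a) once some
block `b` is supported for the slot `(A, r)` it remains supported by all later
blocks of the chain, and consequently (b) the chain never supports two
distinct block proposals for the slot `(A, r)`. -/
theorem unique_support {V : Type} [DecidableEq V] (k : ℕ) (B : ℕ → Block V)
    (A : V) (r : ℕ)
    (h_incr : ∀ i < k, (B i).round < (B (i + 1)).round)
    (h_first : ∀ i < k, (B (i + 1)).parents.head? = some (B i)) :
    (∀ i j : ℕ, i ≤ j → j ≤ k → ∀ b : Block V,
        supportedBlock A r (B i) = some b → supportedBlock A r (B j) = some b)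
    ∧ ¬ ∃ i j : ℕ, i ≤ k ∧ j ≤ k ∧ ∃ b b' : Block V, b ≠ b' ∧
        supportedBlock A r (B i) = some b ∧
        supportedBlock A r (B j) = some b' :=
  unique_support_general k B A r (fun i hi => (h_incr i hi).le) h_first
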